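/- Let n : (0,ε₀) → ℕ satisfy n(ε)/log(1/ε) → ∞ and ε^{1/3}·n(ε) → 0 as ε↓0. Suppose each P_i(ε), 1 ≤ i ≤ n(ε), is stochastic, P̃ is an irreducible and aperiodic stochastic matrix with stationary distribution π̃, and sup_{1 ≤ i ≤ n(ε)} ‖P_i(ε) − (P̃ + ε(i−1)P̃⁽¹⁾)‖ = O(ε² n(ε)²) as ε↓0. Then for every probability row vector μ and column vector r, μ P_1(ε)P_2(ε)⋯P_{n(ε)}(ε) r = π̃ r + ε n(ε) π̃ P̃⁽¹⁾ (I − P̃ + Π̃)^{−1} r − ε π̃ P̃⁽¹⁾ (I − P̃ + Π̃)^{−2} r + O(ε² n(ε)³) as ε↓0. -/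

import Mathlib

open Matrix Topology Filter

/-- The matrix norm ‖A‖ = max_x Σ_y |A(x,y)|. -/
noncomputable def matNorm {T : Type*} [Fintype T] (A : Matrix T T ℝ) : ℝ :=
  ⨆ x, ∑ y, |A x y|

/-- A square matrix is stochastic if all entries are nonnegative and every row sums to 1. -/
def IsStochastic {T : Type*} [Fintype T] (P : Matrix T T ℝ) : Prop :=
  (∀ x y, 0 ≤ P x y) ∧ ∀ x, ∑ y, P x y = 1

/-- The ordered product P 1 * P 2 * ⋯ * P j. -/
noncomputable def prodP {T : Type*} [Fintype T] [DecidableEq T]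
    (P : ℕ → Matrix T T ℝ) (j : ℕ) : Matrix T T ℝ :=
  ((List.range j).map fun i => P (i + 1)).prod

section Core
set_option linter.unusedSectionVars false
set_option linter.unusedVariables false
variable {R : Type*} [NormedRing R] [NormOneClass R] [NormedAlgebra ℝ R]

lemma aux_mul_pow (T Pi Y : R) (hTP : T * Pi = Pi) (hPP : Pi * Pi = Pi)
    (hY : Y * Pi = 0) (k : ℕ) : Y * T ^ k = Y * (T - Pi) ^ k ∧ Y * T ^ k * Pi = 0 := by
  induction k with
  | zero => simp [hY]
  | succ k ih =>
    have h2 : Y * T ^ (k+1) * Pi = 0 := by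
      rw [pow_succ, mul_assoc, mul_assoc, hTP, ← mul_assoc, ih.2]
    refine ⟨?_, h2⟩
    rw [pow_succ, pow_succ, ← mul_assoc, ← mul_assoc, ← ih.1, mul_sub, ih.2, sub_zero]

lemma aux_telescope (T : R) (A X : ℕ → R) (hX0 : X 0 = 1)
    (hXs : ∀ j, X (j+1) = X j * A j) (j : ℕ) :
    X j - T ^ j = ∑ l ∈ Finset.range j, X l * (A l - T) * T ^ (j - 1 - l) := by
  induction j with
  | zero => simp [hX0]
  | succ j ih =>
    rw [Finset.sum_range_succ]
    have : ∑ l ∈ Finset.range j, X l * (A l - T) * T ^ (j + 1 - 1 - l)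
        = (X j - T ^ j) * T := by
      rw [ih, Finset.sum_mul]
      refine Finset.sum_congr rfl fun l hl => ?_
      have hl := Finset.mem_range.1 hl
      rw [show j + 1 - 1 - l = (j - 1 - l) + 1 by omega, pow_succ, mul_assoc _ _ T]
    rw [this, hXs, pow_succ]
    simp only [Nat.add_sub_cancel, Nat.sub_self, pow_zero, mul_one]
    noncomm_ring

lemma aux_geom (Q Z : R) (hZ : (1 - Q) * Z = 1) (hZ' : Z * (1 - Q) = 1) (n : ℕ) :
    ∑ l ∈ Finset.range n, (l : ℝ) • Q ^ (n - 1 - l)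
      = (n : ℝ) • Z - Z ^ 2 + Z ^ 2 * Q ^ n := by
  have hc : Z * Q = Z - 1 := by
    have := hZ'
    rw [mul_sub, mul_one] at this
    rw [← this]; abel
  induction n with
  | zero => simp
  | succ n ih =>
    have h1 : ∑ l ∈ Finset.range (n+1), (l : ℝ) • Q ^ (n + 1 - 1 - l)
        = (∑ l ∈ Finset.range n, (l : ℝ) • Q ^ (n - 1 - l)) * Q + (n : ℝ) • 1 := by
      rw [Finset.sum_range_succ, Finset.sum_mul]
      simp only [Nat.add_sub_cancel, Nat.sub_self, pow_zero]
      congr 1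
      refine Finset.sum_congr rfl fun l hl => ?_
      have hl := Finset.mem_range.1 hl
      rw [show n - l = (n - 1 - l) + 1 by omega, pow_succ, smul_mul_assoc]
    rw [h1, ih]
    have h2 : Z ^ 2 * Q = Z ^ 2 - Z := by
      rw [pow_two, mul_assoc, hc, mul_sub, mul_one]
    rw [add_mul, sub_mul, h2, smul_mul_assoc, hc, mul_assoc, ← pow_succ]
    push_cast
    rw [add_smul, smul_sub, one_smul]
    abel

lemma aux_geom_sum (ρ : ℝ) (h0 : 0 < ρ) (h1 : ρ < 1) (j : ℕ) :
    ∑ l ∈ Finset.range j, ρ ^ (j - 1 - l) ≤ 1 / (1 - ρ) := by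
  rw [Finset.sum_range_reflect (fun k => ρ ^ k) j, geom_sum_eq h1.ne]
  have : (0:ℝ) < 1 - ρ := by linarith
  rw [← neg_div_neg_eq]
  apply div_le_div_of_nonneg_right _ (by linarith) |>.trans_eq
  · congr 1; ring
  · have := pow_pos h0 j; linarith

lemma aux_core (T Pi D Z : R) (A X : ℕ → R) (n : ℕ) (ε c C ρ : ℝ)
    (hX0 : X 0 = 1) (hXs : ∀ j, X (j+1) = X j * A j)
    (hXn : ∀ j ≤ n, ‖X j‖ ≤ 1) (hA : ∀ l < n, A l * Pi = Pi)
    (hTP : T * Pi = Pi) (hPT : Pi * T = Pi) (hPP : Pi * Pi = Pi) (hD : D * Pi = 0)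
    (hPn : ‖Pi‖ ≤ 1)
    (hZ : (1 - (T - Pi)) * Z = 1) (hZ' : Z * (1 - (T - Pi)) = 1)
    (hρ0 : 0 < ρ) (hρ1 : ρ < 1) (hC : 0 ≤ C) (hc : 0 ≤ c)
    (hQ : ∀ k, ‖(T - Pi) ^ k‖ ≤ C * ρ ^ k)
    (hε : 0 < ε) (hn : 1 ≤ n) (hεn : ε * n ≤ 1)
    (hF : ∀ l < n, ‖A l - (T + (ε * (l:ℝ)) • D)‖ ≤ c * ε ^ 2 * (n:ℝ) ^ 2)
    (hρn : ρ ^ n ≤ ε ^ 2) :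
    ‖X n - (Pi + (ε * n) • (Pi * (D * Z)) - ε • (Pi * (D * Z ^ 2)))‖ ≤
      (2 * C + c * C + ‖D‖ * (2 * C ^ 2 / ρ) + ‖D‖ * ((‖D‖ + c) * (C / (1 - ρ))) * (C / (1 - ρ))
        + ‖D‖ * ‖Z‖ ^ 2 * C) * ε ^ 2 * (n : ℝ) ^ 3 := by
  set Q := T - Pi with hQdef
  have h1ρ : 0 < 1 - ρ := by linarith
  have hnR : (1:ℝ) ≤ n := by exact_mod_cast hn
  have hε1 : ε ≤ 1 := by nlinarith
  -- E
  have hEP : ∀ l < n, (A l - T) * Pi = 0 := fun l hl => by rw [sub_mul, hA l hl, hTP, sub_self]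
  have hEn : ∀ l < n, ‖A l - T‖ ≤ (‖D‖ + c) * (ε * n) := by
    intro l hl
    have hlR : (l:ℝ) ≤ n := by exact_mod_cast hl.le
    have e : A l - T = (A l - (T + (ε * (l:ℝ)) • D)) + (ε * (l:ℝ)) • D := by abel
    rw [e]
    refine (norm_add_le _ _).trans ?_
    have h1 := hF l hl
    have h2 : ‖(ε * (l:ℝ)) • D‖ ≤ (ε * n) * ‖D‖ := by
      rw [norm_smul, Real.norm_eq_abs, abs_of_nonneg (by positivity)]
      gcongr
    have h3 : c * ε ^ 2 * (n:ℝ) ^ 2 ≤ c * (ε * n) := by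
      have : (ε * n) * (ε * n) ≤ ε * n * 1 := by gcongr
      nlinarith
    linarith
  have hEQ : ∀ l < n, ∀ k, (A l - T) * T ^ k = (A l - T) * Q ^ k := fun l hl k =>
    (aux_mul_pow T Pi _ hTP hPP (hEP l hl) k).1
  have hTj : ∀ j, ‖T ^ j - Pi‖ ≤ 2 * C * ρ ^ j := by
    intro j
    have hz : (1 - Pi) * Pi = 0 := by rw [sub_mul, hPP, one_mul, sub_self]
    have e := (aux_mul_pow T Pi (1 - Pi) hTP hPP hz j).1
    have hPj : Pi * T ^ j = Pi := by
      induction j with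
      | zero => simp
      | succ j ih => 
        have e' := (aux_mul_pow T Pi (1 - Pi) hTP hPP hz j).1
        rw [pow_succ, ← mul_assoc, ih e', hPT]
    rw [sub_mul, one_mul, hPj] at e
    rw [e]
    have h1 : ‖(1:R) - Pi‖ ≤ 2 := by
      refine (norm_sub_le _ _).trans ?_
      rw [norm_one]; linarith
    refine (norm_mul_le _ _).trans ?_
    have := mul_le_mul h1 (hQ j) (norm_nonneg _) (by norm_num)
    linarith
  have hXT : ∀ j ≤ n, ‖X j - T ^ j‖ ≤ (‖D‖ + c) * (C / (1 - ρ)) * (ε * n) := by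
    intro j hj
    rw [aux_telescope T A X hX0 hXs j]
    calc _ ≤ ∑ l ∈ Finset.range j, ((‖D‖ + c) * (ε * n)) * (C * ρ ^ (j - 1 - l)) := by
          refine norm_sum_le_of_le _ fun l hl => ?_
          have hl := Finset.mem_range.1 hl
          rw [mul_assoc, hEQ l (by omega)]
          refine (norm_mul_le _ _).trans ?_
          have a1 := hXn l (by omega)
          have a2 : ‖(A l - T) * Q ^ (j - 1 - l)‖ ≤ ((‖D‖ + c) * (ε * n)) * (C * ρ ^ (j - 1 - l)) :=
            (norm_mul_le _ _).trans
              (mul_le_mul (hEn l (by omega)) (hQ _) (norm_nonneg _) (by positivity))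
          have := mul_le_mul a1 a2 (norm_nonneg _) zero_le_one
          linarith
      _ = ((‖D‖ + c) * (ε * n)) * C * ∑ l ∈ Finset.range j, ρ ^ (j - 1 - l) := by
          rw [Finset.mul_sum]; exact Finset.sum_congr rfl fun l _ => by ring
      _ ≤ ((‖D‖ + c) * (ε * n)) * C * (1 / (1 - ρ)) := by
          gcongr; exact aux_geom_sum ρ hρ0 hρ1 j
      _ = _ := by ring
  -- decomposition
  have hdec : X n - (Pi + (ε * n) • (Pi * (D * Z)) - ε • (Pi * (D * Z ^ 2)))
      = (T ^ n - Pi)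
        + ∑ l ∈ Finset.range n, X l * ((A l - (T + (ε * (l:ℝ)) • D)) * Q ^ (n - 1 - l))
        + ∑ l ∈ Finset.range n, (ε * (l:ℝ)) • ((X l - Pi) * (D * Q ^ (n - 1 - l)))
        + ε • (Pi * (D * (Z ^ 2 * Q ^ n))) := by
    have e1 := aux_telescope T A X hX0 hXs n
    have e2 : ∑ l ∈ Finset.range n, X l * (A l - T) * T ^ (n - 1 - l)
        = ∑ l ∈ Finset.range n, X l * ((A l - (T + (ε * (l:ℝ)) • D)) * Q ^ (n - 1 - l))
        + ∑ l ∈ Finset.range n, (ε * (l:ℝ)) • ((X l - Pi) * (D * Q ^ (n - 1 - l)))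
        + ε • (Pi * (D * ∑ l ∈ Finset.range n, (l:ℝ) • Q ^ (n - 1 - l))) := by
      rw [Finset.mul_sum, Finset.mul_sum, Finset.smul_sum, ← Finset.sum_add_distrib,
        ← Finset.sum_add_distrib]
      refine Finset.sum_congr rfl fun l hl => ?_
      rw [mul_assoc, hEQ l (Finset.mem_range.1 hl)]
      simp only [mul_smul_comm, smul_smul, sub_mul, mul_sub, add_mul, mul_add, smul_mul_assoc, smul_sub]
      abel
    rw [aux_geom Q Z hZ hZ'] at e2
    rw [e2] at e1
    have e3 : X n = T ^ n + (X n - T ^ n) := by abel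
    rw [e3, e1]
    simp only [mul_add, mul_sub, smul_add, smul_sub, mul_smul_comm, smul_smul]
    abel
  rw [hdec]
  have b1 : ‖T ^ n - Pi‖ ≤ 2 * C * ε ^ 2 * (n:ℝ) ^ 3 := by
    calc _ ≤ 2 * C * ρ ^ n := hTj n
      _ ≤ 2 * C * ε ^ 2 := by gcongr
      _ ≤ _ := le_mul_of_one_le_right (by positivity) (one_le_pow₀ hnR)
  have b2 : ‖∑ l ∈ Finset.range n, X l * ((A l - (T + (ε * (l:ℝ)) • D)) * Q ^ (n - 1 - l))‖
      ≤ c * C * ε ^ 2 * (n:ℝ) ^ 3 := by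
    calc _ ≤ ∑ l ∈ Finset.range n, (c * ε ^ 2 * (n:ℝ) ^ 2) * C := by
          refine norm_sum_le_of_le _ fun l hl => ?_
          have hl := Finset.mem_range.1 hl
          refine (norm_mul_le _ _).trans ?_
          have q : ‖Q ^ (n - 1 - l)‖ ≤ C := (hQ _).trans
            (mul_le_of_le_one_right hC (pow_le_one₀ hρ0.le hρ1.le))
          have a2 := (norm_mul_le (A l - (T + (ε * (l:ℝ)) • D)) (Q ^ (n - 1 - l))).trans
            (mul_le_mul (hF l hl) q (norm_nonneg _) (by positivity))
          have := mul_le_mul (hXn l hl.le) a2 (norm_nonneg _) zero_le_one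
          linarith
      _ = _ := by rw [Finset.sum_const, Finset.card_range, nsmul_eq_mul]; ring
  have b3 : ‖∑ l ∈ Finset.range n, (ε * (l:ℝ)) • ((X l - Pi) * (D * Q ^ (n - 1 - l)))‖
      ≤ (‖D‖ * (2 * C ^ 2 / ρ) + ‖D‖ * ((‖D‖ + c) * (C / (1 - ρ))) * (C / (1 - ρ)))
        * ε ^ 2 * (n:ℝ) ^ 3 := by
    set K2 := (‖D‖ + c) * (C / (1 - ρ)) with hK2
    have hK2n : 0 ≤ K2 := by positivity
    calc _ ≤ ∑ l ∈ Finset.range n, (ε * n) * ((2 * C * ρ ^ l + K2 * (ε * n)) *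
              (‖D‖ * (C * ρ ^ (n - 1 - l)))) := by
          refine norm_sum_le_of_le _ fun l hl => ?_
          have hl := Finset.mem_range.1 hl
          have hlR : (l:ℝ) ≤ n := by exact_mod_cast hl.le
          rw [norm_smul, Real.norm_eq_abs, abs_of_nonneg (by positivity)]
          have a1 : ‖X l - Pi‖ ≤ 2 * C * ρ ^ l + K2 * (ε * n) := by
            have : X l - Pi = (T ^ l - Pi) + (X l - T ^ l) := by abel
            rw [this]
            exact (norm_add_le _ _).trans (add_le_add (hTj l) (hXT l hl.le))
          have a2 : ‖D * Q ^ (n - 1 - l)‖ ≤ ‖D‖ * (C * ρ ^ (n - 1 - l)) :=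
            (norm_mul_le _ _).trans (by gcongr; exact hQ _)
          have a3 := (norm_mul_le (X l - Pi) (D * Q ^ (n - 1 - l))).trans
            (mul_le_mul a1 a2 (norm_nonneg _) (by positivity))
          exact mul_le_mul (by gcongr) a3 (norm_nonneg _) (by positivity)
      _ = ∑ l ∈ Finset.range n, ((ε * n) * (2 * C ^ 2 / ρ) * ‖D‖ * ρ ^ n
            + (ε * n) * K2 * (ε * n) * ‖D‖ * C * ρ ^ (n - 1 - l)) := by
          refine Finset.sum_congr rfl fun l hl => ?_
          have hl := Finset.mem_range.1 hl
          have : ρ ^ n = ρ * (ρ ^ l * ρ ^ (n - 1 - l)) := by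
            rw [← pow_add, ← pow_succ']; congr 1; omega
          rw [this]
          field_simp
      _ = (n:ℝ) * ((ε * n) * (2 * C ^ 2 / ρ) * ‖D‖ * ρ ^ n)
            + (ε * n) * K2 * (ε * n) * ‖D‖ * C * ∑ l ∈ Finset.range n, ρ ^ (n - 1 - l) := by
          rw [Finset.sum_add_distrib, Finset.sum_const, Finset.card_range, nsmul_eq_mul,
            Finset.mul_sum]
      _ ≤ (n:ℝ) * ((1 * n) * (2 * C ^ 2 / ρ) * ‖D‖ * ε ^ 2)
            + (ε * n) * K2 * (ε * n) * ‖D‖ * C * (1 / (1 - ρ)) := by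
          gcongr
          exact aux_geom_sum ρ hρ0 hρ1 n
      _ = ((‖D‖ * (2 * C ^ 2 / ρ) + ‖D‖ * K2 * (C / (1 - ρ))) * ε ^ 2) * (n:ℝ) ^ 2 := by ring
      _ ≤ ((‖D‖ * (2 * C ^ 2 / ρ) + ‖D‖ * K2 * (C / (1 - ρ))) * ε ^ 2) * (n:ℝ) ^ 3 := by
          exact mul_le_mul_of_nonneg_left (pow_le_pow_right₀ hnR (by norm_num)) (by positivity)
  have b4 : ‖ε • (Pi * (D * (Z ^ 2 * Q ^ n)))‖ ≤ ‖D‖ * ‖Z‖ ^ 2 * C * ε ^ 2 * (n:ℝ) ^ 3 := by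
    rw [norm_smul, Real.norm_eq_abs, abs_of_pos hε]
    have hz : ‖Z ^ 2‖ ≤ ‖Z‖ ^ 2 := norm_pow_le _ _
    have q : ‖Q ^ n‖ ≤ C * ε ^ 2 := (hQ n).trans (by gcongr)
    have a1 := (norm_mul_le (Z ^ 2) (Q ^ n)).trans (mul_le_mul hz q (norm_nonneg _) (by positivity))
    have a2 := (norm_mul_le D (Z ^ 2 * Q ^ n)).trans
      (mul_le_mul le_rfl a1 (norm_nonneg _) (by positivity))
    have a3 := (norm_mul_le Pi (D * (Z ^ 2 * Q ^ n))).trans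
      (mul_le_mul hPn a2 (norm_nonneg _) (by positivity))
    calc _ ≤ 1 * (1 * (‖D‖ * (‖Z‖ ^ 2 * (C * ε ^ 2)))) := by gcongr
      _ = ‖D‖ * ‖Z‖ ^ 2 * C * ε ^ 2 := by ring
      _ ≤ _ := le_mul_of_one_le_right (by positivity) (one_le_pow₀ hnR)
  refine (norm_add_le _ _).trans ?_
  refine (add_le_add (norm_add_le _ _) le_rfl).trans ?_
  refine (add_le_add (add_le_add (norm_add_le _ _) le_rfl) le_rfl).trans ?_
  refine (add_le_add (add_le_add (add_le_add b1 b2) b3) b4).trans (le_of_eq ?_)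
  ring

lemma aux_pow_bound (Q : R) (B : ℝ) (hB : 0 < B) (hQB : ∀ k, ‖Q ^ k‖ ≤ B) (M : ℕ) (hM : 0 < M)
    (hQM : ‖Q ^ M‖ < 1) :
    ∃ C ρ : ℝ, 0 ≤ C ∧ 0 < ρ ∧ ρ < 1 ∧ ∀ k, ‖Q ^ k‖ ≤ C * ρ ^ k := by
  set a := max ‖Q ^ M‖ (1/2) with ha
  have ha0 : 0 < a := lt_max_of_lt_right (by norm_num)
  have ha1 : a < 1 := max_lt hQM (by norm_num)
  set ρ := a ^ ((1:ℝ) / M) with hρ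
  have hMR : (0:ℝ) < M := by exact_mod_cast hM
  have h0 : 0 < ρ := Real.rpow_pos_of_pos ha0 _
  have h1 : ρ < 1 := Real.rpow_lt_one ha0.le ha1 (by positivity)
  have hρM : ρ ^ M = a := by
    rw [hρ, one_div, Real.rpow_inv_natCast_pow ha0.le hM.ne']
  refine ⟨B / a, ρ, by positivity, h0, h1, ?_⟩
  intro k
  induction k using Nat.strong_induction_on with
  | _ k ih =>
    by_cases hk : k < M
    · refine (hQB k).trans ?_
      have : a ≤ ρ ^ k := by rw [← hρM]; exact pow_le_pow_of_le_one h0.le h1.le hk.le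
      rw [div_mul_eq_mul_div, le_div_iff₀ ha0]
      gcongr
    · have hk : M ≤ k := not_lt.1 hk
      have e : k = M + (k - M) := by omega
      rw [e, pow_add, pow_add, hρM]
      refine (norm_mul_le _ _).trans ?_
      have := mul_le_mul (le_max_left ‖Q ^ M‖ (1/2)) (ih (k - M) (by omega)) (norm_nonneg _) ha0.le
      refine this.trans (le_of_eq ?_)
      rw [← ha]; ring
end Core

section Mat
open scoped Matrix.Norms.Operator
variable {S : Type*} [Fintype S] [Nonempty S] [DecidableEq S]

lemma aux_norm_le (A : Matrix S S ℝ) (b : ℝ) (h : ∀ x, ∑ y, |A x y| ≤ b) : ‖A‖ ≤ b := by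
  obtain ⟨x0⟩ := ‹Nonempty S›
  have hb : 0 ≤ b := (Finset.sum_nonneg fun y _ => abs_nonneg (A x0 y)).trans (h x0)
  rw [Matrix.linfty_opNorm_def]
  lift b to NNReal using hb
  rw [NNReal.coe_le_coe]
  refine Finset.sup_le fun x _ => ?_
  rw [← NNReal.coe_le_coe]
  push_cast
  simpa [Real.norm_eq_abs] using h x

lemma aux_norm_le_matNorm (A : Matrix S S ℝ) : ‖A‖ ≤ matNorm A :=
  aux_norm_le A _ fun x => le_ciSup (f := fun x => ∑ y, |A x y|) (Set.finite_range _).bddAbove x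

lemma IsStochastic.norm_le {A : Matrix S S ℝ} (h : IsStochastic A) : ‖A‖ ≤ 1 :=
  aux_norm_le A 1 fun x => by
    rw [← h.2 x]
    exact le_of_eq (Finset.sum_congr rfl fun y _ => abs_of_nonneg (h.1 x y))

lemma IsStochastic.mul {A B : Matrix S S ℝ} (hA : IsStochastic A) (hB : IsStochastic B) :
    IsStochastic (A * B) := by
  refine ⟨fun x y => ?_, fun x => ?_⟩
  · rw [Matrix.mul_apply]
    exact Finset.sum_nonneg fun z _ => mul_nonneg (hA.1 x z) (hB.1 z y)
  · simp only [Matrix.mul_apply]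
    rw [Finset.sum_comm]
    simp only [← Finset.mul_sum, hB.2, mul_one, hA.2]

lemma IsStochastic.one : IsStochastic (1 : Matrix S S ℝ) := by
  refine ⟨fun x y => ?_, fun x => ?_⟩
  · rw [Matrix.one_apply]; split_ifs <;> norm_num
  · simp [Matrix.one_apply]

lemma IsStochastic.pow {A : Matrix S S ℝ} (hA : IsStochastic A) (k : ℕ) : IsStochastic (A ^ k) := by
  induction k with
  | zero => simpa using IsStochastic.one
  | succ k ih => rw [pow_succ]; exact ih.mul hA

lemma prodP_succ' (P : ℕ → Matrix S S ℝ) (j : ℕ) : prodP P (j+1) = prodP P j * P (j+1) := by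
  simp [prodP, List.range_succ]

lemma prodP_stoch (P : ℕ → Matrix S S ℝ) (n : ℕ)
    (h : ∀ i, 1 ≤ i → i ≤ n → IsStochastic (P i)) (j : ℕ) (hj : j ≤ n) :
    IsStochastic (prodP P j) := by
  induction j with
  | zero => simpa [prodP] using IsStochastic.one
  | succ j ih => rw [prodP_succ']; exact (ih (by omega)).mul (h _ (by omega) hj)

lemma IsStochastic.mul_Pi {A : Matrix S S ℝ} (hA : IsStochastic A) (π : S → ℝ) :
    A * (Matrix.of fun _ y => π y) = Matrix.of fun _ y => π y := by
  ext x y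
  simp [Matrix.mul_apply, ← Finset.sum_mul, hA.2]

lemma Pi_mul (A : Matrix S S ℝ) (π : S → ℝ) (h : π ᵥ* A = π) :
    (Matrix.of fun (_ : S) y => π y) * A = Matrix.of fun _ y => π y := by
  ext x y
  have := congrFun h y
  simpa [Matrix.mul_apply, Matrix.vecMul, dotProduct] using this

lemma aux_mix (T : Matrix S S ℝ) (hT : IsStochastic T) (hirr : ∃ N : ℕ, ∀ x y, 0 < (T ^ N) x y)
    (π : S → ℝ) (hπ0 : ∀ x, 0 ≤ π x) (hπ1 : ∑ x, π x = 1) (hπP : π ᵥ* T = π) :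
    ∃ M, 0 < M ∧ (∀ k, ‖(T - Matrix.of fun _ y => π y) ^ k‖ ≤ 2) ∧
      ‖(T - Matrix.of fun _ y => π y) ^ M‖ < 1 := by
  set Pi : Matrix S S ℝ := Matrix.of fun _ y => π y with hPi
  have hPS : IsStochastic Pi := ⟨fun x y => hπ0 y, fun x => hπ1⟩
  have hPP : Pi * Pi = Pi := hPS.mul_Pi π
  have hPT : Pi * T = Pi := Pi_mul T π hπP
  have hPTk : ∀ k, Pi * T ^ k = Pi := by
    intro k
    induction k with
    | zero => simp
    | succ k ih => rw [pow_succ, ← mul_assoc, ih, hPT]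
  have hQk : ∀ k, (T - Pi) ^ (k+1) = T ^ (k+1) - Pi := by
    intro k
    induction k with
    | zero => simp
    | succ k ih =>
      rw [pow_succ, ih, sub_mul, mul_sub, mul_sub, (hT.pow _).mul_Pi π, hPT, hPP, ← pow_succ]
      abel
  have hQ2 : ∀ k, ‖(T - Pi) ^ k‖ ≤ 2 := by
    intro k
    cases k with
    | zero => simp
    | succ k =>
      rw [hQk]
      refine (norm_sub_le _ _).trans ?_
      have := (hT.pow (k+1)).norm_le
      have := hPS.norm_le
      linarith
  obtain ⟨N, hN⟩ := hirr
  have hN1 : ∀ x y, 0 < (T ^ (N+1)) x y := by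
    intro x y
    rw [pow_succ', Matrix.mul_apply]
    have h1 : (0:ℝ) < ∑ z, T x z := by rw [hT.2]; exact one_pos
    obtain ⟨z, hz, hz'⟩ := Finset.exists_lt_of_sum_lt (f := fun _ => (0:ℝ)) (s := Finset.univ)
      (g := fun z => T x z) (by simpa using h1)
    exact Finset.sum_pos' (fun w _ => mul_nonneg (hT.1 x w) (hN w y).le)
      ⟨z, hz, mul_pos hz' (hN z y)⟩
  obtain ⟨⟨x0, y0⟩, hmin⟩ := Finite.exists_min (fun p : S × S => (T ^ (N+1)) p.1 p.2)
  set δ := min ((T ^ (N+1)) x0 y0) (1/2) with hδ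
  have hδ0 : 0 < δ := lt_min (hN1 _ _) (by norm_num)
  have hδ1 : δ ≤ 1/2 := min_le_right _ _
  have hπle : ∀ y, π y ≤ 1 := fun y => by
    rw [← hπ1]; exact Finset.single_le_sum (fun z _ => hπ0 z) (Finset.mem_univ y)
  set W := T ^ (N+1) - δ • Pi with hW
  have hWn : ‖W‖ ≤ 1 - δ := by
    refine aux_norm_le _ _ fun x => ?_
    have e : ∀ y, |W x y| = (T ^ (N+1)) x y - δ * π y := by
      intro y
      have : W x y = (T ^ (N+1)) x y - δ * π y := by simp [hW, hPi]
      rw [this, abs_of_nonneg]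
      have h1 : δ ≤ (T ^ (N+1)) x y := (min_le_left _ _).trans (hmin (x, y))
      have := mul_le_mul_of_nonneg_left (hπle y) hδ0.le
      linarith
    simp only [e]
    rw [Finset.sum_sub_distrib, (hT.pow _).2, ← Finset.mul_sum, hπ1, mul_one]
  have hPQ : Pi * (T - Pi) = 0 := by rw [mul_sub, hPT, hPP, sub_self]
  have hstep : (T - Pi) ^ (N+1) * (T - Pi) ^ (N+1) = W * (T - Pi) ^ (N+1) := by
    have e : (T - Pi) ^ (N+1) = W - (1 - δ) • Pi := by
      rw [hQk, hW, sub_smul, one_smul]; abel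
    have e0 : Pi * (T - Pi) ^ (N+1) = 0 := by rw [pow_succ', ← mul_assoc, hPQ, zero_mul]
    nth_rewrite 1 [e]
    rw [sub_mul, smul_mul_assoc, e0, smul_zero, sub_zero]
  have hm : ∀ m, (T - Pi) ^ ((N+1) * (m+1)) = W ^ m * (T - Pi) ^ (N+1) := by
    intro m
    induction m with
    | zero => simp
    | succ m ih => rw [mul_add _ (m+1), mul_one, pow_add, ih, mul_assoc, hstep, ← mul_assoc, ← pow_succ]
  obtain ⟨m, hm'⟩ := exists_pow_lt_of_lt_one (show (0:ℝ) < 1/2 by norm_num)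
    (show 1 - δ < 1 by linarith)
  refine ⟨(N+1) * (m+1), by positivity, hQ2, ?_⟩
  rw [hm]
  have a1 : ‖W ^ m‖ ≤ (1 - δ) ^ m := (norm_pow_le _ _).trans (by gcongr)
  have a2 := (norm_mul_le (W ^ m) ((T - Pi) ^ (N+1))).trans
    (mul_le_mul a1 (hQ2 _) (norm_nonneg _) (by apply pow_nonneg; linarith))
  linarith

lemma aux_dot (M : Matrix S S ℝ) (μ r : S → ℝ) (h0 : ∀ x, 0 ≤ μ x) (h1 : ∑ x, μ x = 1) :
    |μ ⬝ᵥ (M *ᵥ r)| ≤ ‖M‖ * ‖r‖ := by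
  have h := Matrix.linfty_opNorm_mulVec M r
  calc |μ ⬝ᵥ (M *ᵥ r)| ≤ ∑ x, |μ x * (M *ᵥ r) x| := Finset.abs_sum_le_sum_abs _ _
    _ ≤ ∑ x, μ x * (‖M‖ * ‖r‖) := by
        refine Finset.sum_le_sum fun x _ => ?_
        rw [abs_mul, abs_of_nonneg (h0 x)]
        exact mul_le_mul_of_nonneg_left ((norm_le_pi_norm (M *ᵥ r) x).trans h) (h0 x)
    _ = _ := by rw [← Finset.sum_mul, h1, one_mul]

lemma aux_dot_Pi (Y : Matrix S S ℝ) (μ π r : S → ℝ) (h1 : ∑ x, μ x = 1) :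
    μ ⬝ᵥ (((Matrix.of fun (_ : S) y => π y) * Y) *ᵥ r) = π ⬝ᵥ (Y *ᵥ r) := by
  rw [← Matrix.mulVec_mulVec]
  have : (Matrix.of fun (_ : S) y => π y) *ᵥ (Y *ᵥ r) = fun _ => π ⬝ᵥ (Y *ᵥ r) := by
    ext x; rfl
  rw [this, dotProduct, ← Finset.sum_mul, h1, one_mul]

lemma aux_main
    (ε₀ : ℝ) (hε₀ : 0 < ε₀) (n : ℝ → ℕ)
    (hn1 : Tendsto (fun ε => (n ε : ℝ) / Real.log (1/ε)) (𝓝[>] (0:ℝ)) atTop)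
    (hn2 : Tendsto (fun ε => ε ^ ((1:ℝ)/3) * (n ε : ℝ)) (𝓝[>] (0:ℝ)) (𝓝 0))
    (P : ℕ → ℝ → Matrix S S ℝ) (Pt Pt1 : Matrix S S ℝ)
    (hstoch : ∀ ε : ℝ, 0 < ε → ε < ε₀ → ∀ i : ℕ, 1 ≤ i → i ≤ n ε → IsStochastic (P i ε))
    (hPt : IsStochastic Pt)
    (hirr : ∃ N : ℕ, ∀ x y, 0 < (Pt ^ N) x y)
    (π : S → ℝ) (hπ0 : ∀ x, 0 ≤ π x) (hπ1 : ∑ x, π x = 1) (hπP : π ᵥ* Pt = π)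
    (happrox : ∃ c > (0:ℝ), ∃ ε₁ > (0:ℝ), ∀ ε : ℝ, 0 < ε → ε < ε₁ →
      ∀ i : ℕ, 1 ≤ i → i ≤ n ε →
        matNorm (P i ε - (Pt + (ε * ((i : ℝ) - 1)) • Pt1)) ≤ c * ε ^ 2 * (n ε : ℝ) ^ 2)
    (μ r : S → ℝ) (hμ0 : ∀ x, 0 ≤ μ x) (hμ1 : ∑ x, μ x = 1) :
      ∃ c > (0:ℝ), ∃ ε₂ > (0:ℝ), ∀ ε : ℝ, 0 < ε → ε < ε₂ →
        |μ ⬝ᵥ (prodP (fun k => P k ε) (n ε) *ᵥ r) -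
            (π ⬝ᵥ r +
              ε * (n ε : ℝ) *
                (π ⬝ᵥ ((Pt1 * (1 - Pt + Matrix.of fun _ y => π y)⁻¹) *ᵥ r)) -
              ε * (π ⬝ᵥ ((Pt1 * ((1 - Pt + Matrix.of fun _ y => π y)⁻¹) ^ 2) *ᵥ r)))|
          ≤ c * ε ^ 2 * (n ε : ℝ) ^ 3 := by
  obtain ⟨M, hM0, hQ2, hQM⟩ := aux_mix Pt hPt hirr π hπ0 hπ1 hπP
  set Pi : Matrix S S ℝ := Matrix.of fun _ y => π y with hPi
  have hPS : IsStochastic Pi := ⟨fun x y => hπ0 y, fun x => hπ1⟩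
  obtain ⟨C, ρ, hC, hρ0, hρ1, hQ⟩ := aux_pow_bound (Pt - Pi) 2 two_pos hQ2 M hM0 hQM
  -- invertibility
  have hunit : IsUnit (1 - Pt + Pi) := by
    haveI : CompleteSpace (Matrix S S ℝ) := FiniteDimensional.complete ℝ _
    have h1 := isUnit_one_sub_of_norm_lt_one hQM
    rw [← mul_neg_geom_sum (Pt - Pi) M] at h1
    have e : 1 - Pt + Pi = 1 - (Pt - Pi) := by abel
    rw [e]
    rw [Matrix.isUnit_iff_isUnit_det] at h1 ⊢
    rw [Matrix.det_mul] at h1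
    exact isUnit_of_mul_isUnit_left h1
  have hdet := (Matrix.isUnit_iff_isUnit_det _).1 hunit
  set Z := (1 - Pt + Pi)⁻¹ with hZdef
  have hZ : (1 - (Pt - Pi)) * Z = 1 := by
    rw [show 1 - (Pt - Pi) = 1 - Pt + Pi by abel]; exact Matrix.mul_nonsing_inv _ hdet
  have hZ' : Z * (1 - (Pt - Pi)) = 1 := by
    rw [show 1 - (Pt - Pi) = 1 - Pt + Pi by abel]; exact Matrix.nonsing_inv_mul _ hdet
  obtain ⟨c, hc, ε₁, hε₁, happ⟩ := happrox
  -- eventual facts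
  have hεn : Tendsto (fun ε : ℝ => ε * (n ε : ℝ)) (𝓝[>] (0:ℝ)) (𝓝 0) := by
    have h3 : Tendsto (fun ε : ℝ => ε ^ ((2:ℝ)/3)) (𝓝[>] (0:ℝ)) (𝓝 0) := by
      have : ContinuousAt (fun ε : ℝ => ε ^ ((2:ℝ)/3)) 0 :=
        Real.continuousAt_rpow_const _ _ (Or.inr (by norm_num))
      have h := this.tendsto
      rw [Real.zero_rpow (by norm_num)] at h
      exact h.mono_left nhdsWithin_le_nhds
    have := h3.mul hn2
    rw [zero_mul] at this
    refine this.congr' ?_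
    filter_upwards [self_mem_nhdsWithin] with ε hε
    rw [← mul_assoc, ← Real.rpow_add hε]
    norm_num
  have hev_pos : ∀ᶠ ε in 𝓝[>] (0:ℝ), 0 < ε := self_mem_nhdsWithin
  have hev : ∀ δ > (0:ℝ), ∀ᶠ ε in 𝓝[>] (0:ℝ), ε < δ := fun δ hδ =>
    nhdsWithin_le_nhds (Iio_mem_nhds hδ)
  have hlin : ∀ K : ℝ, ∀ᶠ ε in 𝓝[>] (0:ℝ), K * Real.log (1/ε) ≤ n ε := by
    intro K
    filter_upwards [hn1.eventually_ge_atTop K, hev_pos, hev 1 one_pos] with ε h hp h1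
    have : 0 < Real.log (1/ε) := Real.log_pos (by rw [lt_div_iff₀ hp]; linarith)
    rwa [le_div_iff₀ this] at h
  have hn2' : ∀ᶠ ε in 𝓝[>] (0:ℝ), 2 ≤ n ε := by
    filter_upwards [hlin 2, hev_pos, hev (Real.exp (-1)) (Real.exp_pos _)] with ε h hp h1
    have h2 : Real.log ε ≤ -1 := by
      rw [← Real.log_exp (-1)]; exact Real.log_le_log hp h1.le
    rw [one_div, Real.log_inv] at h
    have : (2:ℝ) ≤ n ε := by linarith
    exact_mod_cast this
  have hρn : ∀ᶠ ε in 𝓝[>] (0:ℝ), ρ ^ (n ε) ≤ ε ^ 2 := by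
    have hl : Real.log ρ < 0 := Real.log_neg hρ0 hρ1
    filter_upwards [hlin (2 / (-Real.log ρ)), hev_pos] with ε h hp
    rw [← Real.log_le_log_iff (pow_pos hρ0 _) (pow_pos hp _), Real.log_pow, Real.log_pow]
    rw [one_div, Real.log_inv, div_mul_eq_mul_div, div_le_iff₀ (by linarith)] at h
    push_cast
    linarith
  have hF : ∀ ε : ℝ, 0 < ε → ε < ε₁ → ∀ l < n ε,
      ‖P (l+1) ε - (Pt + (ε * (l:ℝ)) • Pt1)‖ ≤ c * ε ^ 2 * (n ε : ℝ) ^ 2 := by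
    intro ε h0 h1 l hl
    have := happ ε h0 h1 (l+1) (by omega) (by omega)
    push_cast at this
    rw [add_sub_cancel_right] at this
    exact (aux_norm_le_matNorm _).trans this
  -- D * Pi = 0
  have hD : Pt1 * Pi = 0 := by
    by_contra hne
    have hpos : 0 < ‖Pt1 * Pi‖ := norm_pos_iff.2 hne
    have hsmall : ∀ᶠ ε in 𝓝[>] (0:ℝ), ε * (n ε : ℝ) < ‖Pt1 * Pi‖ / (2 * c) :=
      hεn.eventually_lt_const (by positivity)
    obtain ⟨ε, h1, h2, h3, h4, h5⟩ :=
      (hsmall.and (hn2'.and (hev_pos.and ((hev ε₀ hε₀).and (hev ε₁ hε₁))))).exists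
    have hf := hF ε h3 h5 (n ε - 1) (by omega)
    have hs := hstoch ε h3 h4 (n ε - 1 + 1) (by omega) (by omega)
    have e : (P (n ε - 1 + 1) ε - (Pt + (ε * ((n ε - 1 : ℕ):ℝ)) • Pt1)) * Pi
        = -((ε * ((n ε - 1 : ℕ):ℝ)) • (Pt1 * Pi)) := by
      rw [sub_mul, add_mul, hs.mul_Pi π, hPt.mul_Pi π, smul_mul_assoc]; abel
    have hb := (norm_mul_le (P (n ε - 1 + 1) ε - (Pt + (ε * ((n ε - 1 : ℕ):ℝ)) • Pt1)) Pi).trans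
      (mul_le_mul hf hPS.norm_le (norm_nonneg _) (by positivity))
    rw [e, norm_neg, norm_smul, Real.norm_eq_abs, abs_of_nonneg (by positivity), mul_one,
      Nat.cast_sub (by omega), Nat.cast_one] at hb
    have hnR : (2:ℝ) ≤ n ε := by exact_mod_cast h2
    rw [lt_div_iff₀ (by positivity)] at h1
    have k1 : ε * ((n ε : ℝ) / 2) * ‖Pt1 * Pi‖ ≤ ε * ((n ε : ℝ) - 1) * ‖Pt1 * Pi‖ := by
      gcongr; linarith
    have k2 : (ε * (n ε : ℝ)) * (ε * (n ε : ℝ) * (2 * c)) < (ε * (n ε : ℝ)) * ‖Pt1 * Pi‖ :=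
      mul_lt_mul_of_pos_left h1 (by positivity)
    nlinarith
  -- conclusion
  set K := (2 * C + c * C + ‖Pt1‖ * (2 * C ^ 2 / ρ)
        + ‖Pt1‖ * ((‖Pt1‖ + c) * (C / (1 - ρ))) * (C / (1 - ρ)) + ‖Pt1‖ * ‖Z‖ ^ 2 * C) with hK
  have h1ρ : 0 < 1 - ρ := by linarith
  have hK0 : 0 ≤ K := by positivity
  have hfin : ∀ᶠ ε in 𝓝[>] (0:ℝ), |μ ⬝ᵥ (prodP (fun k => P k ε) (n ε) *ᵥ r) -
            (π ⬝ᵥ r + ε * (n ε : ℝ) * (π ⬝ᵥ ((Pt1 * Z) *ᵥ r)) -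
              ε * (π ⬝ᵥ ((Pt1 * Z ^ 2) *ᵥ r)))|
          ≤ (K * ‖r‖ + 1) * ε ^ 2 * (n ε : ℝ) ^ 3 := by
    filter_upwards [hev_pos, hev ε₀ hε₀, hev ε₁ hε₁, hn2', hρn,
      hεn.eventually_le_const (show (0:ℝ) < 1 from one_pos)] with ε h0 h1 h2 h3 h4 h5
    have hst := hstoch ε h0 h1
    have hcore := aux_core Pt Pi Pt1 Z (fun l => P (l+1) ε) (fun j => prodP (fun k => P k ε) j)
      (n ε) ε c C ρ (by simp [prodP]) (fun j => prodP_succ' _ j)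
      (fun j hj => (prodP_stoch _ (n ε) hst j hj).norm_le)
      (fun l hl => (hst (l+1) (by omega) (by omega)).mul_Pi π)
      (hPt.mul_Pi π) (Pi_mul Pt π hπP) (hPS.mul_Pi π) hD hPS.norm_le hZ hZ' hρ0 hρ1 hC hc.le hQ
      h0 (by omega) h5 (hF ε h0 h2) h4
    have hd := aux_dot _ μ r hμ0 hμ1 |>.trans (mul_le_mul_of_nonneg_right hcore (norm_nonneg r))
    have e1 : μ ⬝ᵥ (Pi *ᵥ r) = π ⬝ᵥ r := by
      have := aux_dot_Pi 1 μ π r hμ1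
      simpa using this
    rw [Matrix.sub_mulVec, Matrix.sub_mulVec, Matrix.add_mulVec, Matrix.smul_mulVec,
      Matrix.smul_mulVec, dotProduct_sub, dotProduct_sub, dotProduct_add, dotProduct_smul,
      dotProduct_smul, aux_dot_Pi _ μ π r hμ1, aux_dot_Pi _ μ π r hμ1, e1, smul_eq_mul,
      smul_eq_mul] at hd
    refine hd.trans ?_
    rw [← hK]
    have : 0 ≤ ε ^ 2 * (n ε : ℝ) ^ 3 := by positivity
    nlinarith
  rw [eventually_nhdsWithin_iff, Metric.eventually_nhds_iff] at hfin
  obtain ⟨ε₂, hε₂, h⟩ := hfin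
  refine ⟨K * ‖r‖ + 1, by positivity, ε₂, hε₂, fun ε h0 h1 => h ?_ h0⟩
  rw [Real.dist_eq, sub_zero, abs_of_pos h0]; exact h1
end Mat

/-- Theorem 4: first-order approximation of μ P₁(ε)⋯P_{n(ε)}(ε) r for moderate
horizons n(ε), expanding around the initial transition matrix P̃, with error
O(ε² n(ε)³) as ε ↓ 0. -/
theorem transient_expectation_initial_expansion
    {S : Type*} [Fintype S] [Nonempty S] [DecidableEq S]
    (ε₀ : ℝ) (hε₀ : 0 < ε₀) (n : ℝ → ℕ)
    (hn1 : Tendsto (fun ε => (n ε : ℝ) / Real.log (1/ε)) (𝓝[>] (0:ℝ)) atTop)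
    (hn2 : Tendsto (fun ε => ε ^ ((1:ℝ)/3) * (n ε : ℝ)) (𝓝[>] (0:ℝ)) (𝓝 0))
    (P : ℕ → ℝ → Matrix S S ℝ) (Pt Pt1 : Matrix S S ℝ)
    (hstoch : ∀ ε : ℝ, 0 < ε → ε < ε₀ → ∀ i : ℕ, 1 ≤ i → i ≤ n ε → IsStochastic (P i ε))
    (hPt : IsStochastic Pt)
    (hirr : ∃ N : ℕ, ∀ x y, 0 < (Pt ^ N) x y)
    (π : S → ℝ) (hπ0 : ∀ x, 0 ≤ π x) (hπ1 : ∑ x, π x = 1) (hπP : π ᵥ* Pt = π)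
    (happrox : ∃ c > (0:ℝ), ∃ ε₁ > (0:ℝ), ∀ ε : ℝ, 0 < ε → ε < ε₁ →
      ∀ i : ℕ, 1 ≤ i → i ≤ n ε →
        matNorm (P i ε - (Pt + (ε * ((i : ℝ) - 1)) • Pt1)) ≤ c * ε ^ 2 * (n ε : ℝ) ^ 2) :
    ∀ μ r : S → ℝ, (∀ x, 0 ≤ μ x) → (∑ x, μ x = 1) →
      ∃ c > (0:ℝ), ∃ ε₂ > (0:ℝ), ∀ ε : ℝ, 0 < ε → ε < ε₂ →
        |μ ⬝ᵥ (prodP (fun k => P k ε) (n ε) *ᵥ r) -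
            (π ⬝ᵥ r +
              ε * (n ε : ℝ) *
                (π ⬝ᵥ ((Pt1 * (1 - Pt + Matrix.of fun _ y => π y)⁻¹) *ᵥ r)) -
              ε * (π ⬝ᵥ ((Pt1 * ((1 - Pt + Matrix.of fun _ y => π y)⁻¹) ^ 2) *ᵥ r)))|
          ≤ c * ε ^ 2 * (n ε : ℝ) ^ 3 := by
  intro μ r h0 h1
  exact aux_main ε₀ hε₀ n hn1 hn2 P Pt Pt1 hstoch hPt hirr π hπ0 hπ1 hπP happrox μ r h0 h1
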